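/- Let 0<α<1, λ > 0, c ∈ ℝ, T > 0, and let F be continuously differentiable on [0,T]. Then the function T_*(t) = c E_α(−λ t^α) + ∫₀ᵗ τ^{α−1} E_{α,α}(−λ τ^α) F(t−τ) dτ is continuous on [0,T] with T_*(0) = c, and satisfies the fractional differential equation (D^α T_*)(t) = −λ T_*(t) + F(t) for all t ∈ (0,T], where D^α is the Caputo fractional derivative. -/

import Mathlib

open MeasureTheory Set Filter

/-- The Caputo fractional derivative of order `α` of `f` at `t`:
`(D^α f)(t) = (1/Γ(1−α)) ∫₀ᵗ (t−s)^{−α} f'(s) ds`. -/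
noncomputable def caputo (α : ℝ) (f : ℝ → ℝ) (t : ℝ) : ℝ :=
  (1 / Real.Gamma (1 - α)) * ∫ s in (0:ℝ)..t, (t - s) ^ (-α) * deriv f s

/-- The two-parameter Mittag-Leffler function `E_{α,β}(z) = ∑_{k≥0} z^k/Γ(αk+β)`;
`E_α = E_{α,1}`. -/
noncomputable def ml (α β z : ℝ) : ℝ := ∑' k : ℕ, z ^ k / Real.Gamma (α * k + β)

/-!
Write `*` for the finite convolution `(f * g)(t) = ∫₀ᵗ f(s) g(t - s) ds`, put `z = -λ` and
`K(s) = s^(α-1) E_{α,α}(z s^α)`, and let `φ(s) = s^(-α) / Γ(1-α)`, so that `D^α f = φ * f'`.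
Convolving the series of `K` term by term with `φ`, resp. with `1`, by means of Euler's Beta
integral gives the resolvent identity `φ * K = E_α(z t^α) = 1 + z (1 * K)`.

Since `F = F(0) + 1 * F'`, this turns `T_* = c E_α(z t^α) + K * F` into the primitive `c + 1 * w` of
`w = (F(0) + z c) K + K * F'`. Hence `T_*` is absolutely continuous with `T_*' = w` almost
everywhere, and by associativity of `*`
`D^α T_* = φ * w = (F(0) + z c) + 1 * F' + z (1 * w) = F + z T_*`.
-/

section LineConvolution

open ContinuousLinearMap Convolution

variable {f g k : ℝ → ℝ} {x : ℝ}

lemma integrable_mul_convolution_integrand (hf : Integrable f) (hg : Integrable g)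
    (hk : Integrable k)
    (hfgk : ConvolutionExistsAt ((fun y ↦ ‖f y‖) ⋆[mul ℝ ℝ, volume] fun y ↦ ‖g y‖)
      (fun y ↦ ‖k y‖) x (mul ℝ ℝ)) :
    Integrable (fun p : ℝ × ℝ ↦ f p.2 * (g (p.1 - p.2) * k (x - p.1)))
      (volume.prod volume) := by
  have hmeas : AEStronglyMeasurable (fun p : ℝ × ℝ ↦ f p.2 * (g (p.1 - p.2) * k (x - p.1)))
      (volume.prod volume) := by
    have hfg := hf.aestronglyMeasurable.convolution_integrand (μ := volume) (mul ℝ ℝ)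
      hg.aestronglyMeasurable
    refine (hfg.mul (hk.comp_sub_left x).aestronglyMeasurable.comp_fst).congr (.of_forall ?_)
    intro p
    simp only [mul_apply', Pi.mul_apply, mul_assoc]
  rw [integrable_prod_iff hmeas]
  constructor
  · filter_upwards [hf.ae_convolution_exists (mul ℝ ℝ) hg] with r hr
    simpa only [mul_apply', mul_assoc] using hr.integrable.mul_const (k (x - r))
  · refine hfgk.integrable.congr (.of_forall fun r ↦ ?_)
    simp only [mul_apply', convolution_def, norm_mul, ← integral_mul_const, mul_assoc]

lemma convolution_assoc_of_integrable (hf : Integrable f) (hg : Integrable g) (hk : Integrable k)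
    (hfgk : ConvolutionExistsAt ((fun y ↦ ‖f y‖) ⋆[mul ℝ ℝ, volume] fun y ↦ ‖g y‖)
      (fun y ↦ ‖k y‖) x (mul ℝ ℝ)) :
    ((f ⋆[mul ℝ ℝ, volume] g) ⋆[mul ℝ ℝ, volume] k) x =
      (f ⋆[mul ℝ ℝ, volume] (g ⋆[mul ℝ ℝ, volume] k)) x :=
  convolution_assoc' (mul ℝ ℝ) (mul ℝ ℝ) (mul ℝ ℝ) (mul ℝ ℝ) mul_assoc
    (hf.ae_convolution_exists _ hg) (hg.ae_convolution_exists _ hk)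
    (integrable_mul_convolution_integrand hf hg hk hfgk)

lemma convolutionExistsAt_convolution_right (hf : Integrable f) (hg : Integrable g)
    (hk : Integrable k)
    (hfgk : ConvolutionExistsAt ((fun y ↦ ‖f y‖) ⋆[mul ℝ ℝ, volume] fun y ↦ ‖g y‖)
      (fun y ↦ ‖k y‖) x (mul ℝ ℝ)) :
    ConvolutionExistsAt f (g ⋆[mul ℝ ℝ, volume] k) x (mul ℝ ℝ) := by
  refine (integrable_mul_convolution_integrand hf hg hk hfgk).integral_prod_right.congr
    (.of_forall fun s ↦ ?_)
  have hshift := integral_sub_right_eq_self (μ := volume) (fun r ↦ g r * k (x - s - r)) s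
  simp only [sub_sub_sub_cancel_right] at hshift
  simp only [mul_apply', convolution_def, integral_const_mul, hshift]

end LineConvolution

/-- The finite (Laplace) convolution `(f * g)(t) = ∫₀ᵗ f(s) g(t - s) ds`. It only sees the values
of `f` and `g` on `(0, t)`. -/
noncomputable def laplaceConv (f g : ℝ → ℝ) (t : ℝ) : ℝ := ∫ s in (0 : ℝ)..t, f s * g (t - s)

/-- Absolute convergence of the integral `laplaceConv f g t`. -/
def LaplaceConvExistsAt (f g : ℝ → ℝ) (t : ℝ) : Prop :=
  IntervalIntegrable (fun s ↦ f s * g (t - s)) volume 0 t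

section LaplaceConv

variable {f f' g g' : ℝ → ℝ} {t : ℝ}

lemma laplaceConv_comm (f g : ℝ → ℝ) (t : ℝ) : laplaceConv f g t = laplaceConv g f t := by
  have h := intervalIntegral.integral_comp_sub_left (a := 0) (b := t) (fun s ↦ g s * f (t - s)) t
  simp only [sub_sub_cancel, sub_self, sub_zero] at h
  simpa only [laplaceConv, mul_comm (f _)] using h

lemma LaplaceConvExistsAt.symm (h : LaplaceConvExistsAt f g t) : LaplaceConvExistsAt g f t := by
  have := (IntervalIntegrable.comp_sub_left h t).symm
  simpa only [LaplaceConvExistsAt, sub_sub_cancel, sub_self, sub_zero, mul_comm (f _)] using this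

lemma laplaceConvExistsAt_one_right_iff :
    LaplaceConvExistsAt f 1 t ↔ IntervalIntegrable f volume 0 t := by
  simp only [LaplaceConvExistsAt, Pi.one_apply, mul_one]

lemma laplaceConv_one_left (f : ℝ → ℝ) (t : ℝ) : laplaceConv 1 f t = ∫ s in (0 : ℝ)..t, f s := by
  rw [laplaceConv_comm]
  simp only [laplaceConv, Pi.one_apply, mul_one]

lemma laplaceConvExistsAt_iff (ht : 0 ≤ t) :
    LaplaceConvExistsAt f g t ↔ Integrable ((Ioo 0 t).indicator fun s ↦ f s * g (t - s)) := by
  rw [LaplaceConvExistsAt, intervalIntegrable_iff_integrableOn_Ioo_of_le ht,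
    integrable_indicator_iff measurableSet_Ioo]

lemma laplaceConv_eq_integral_indicator (ht : 0 ≤ t) :
    laplaceConv f g t = ∫ s, (Ioo 0 t).indicator (fun s ↦ f s * g (t - s)) s := by
  rw [laplaceConv, intervalIntegral.integral_of_le ht, integral_Ioc_eq_integral_Ioo,
    integral_indicator measurableSet_Ioo]

lemma laplaceConv_congr_left (ht : 0 ≤ t) (h : f =ᵐ[volume.restrict (Ioo 0 t)] f') :
    laplaceConv f g t = laplaceConv f' g t := by
  simp only [laplaceConv, intervalIntegral.integral_of_le ht, integral_Ioc_eq_integral_Ioo]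
  exact integral_congr_ae (h.mono fun s hs ↦ by simp only [hs])

lemma laplaceConv_congr_right (ht : 0 ≤ t) (h : g =ᵐ[volume.restrict (Ioo 0 t)] g') :
    laplaceConv f g t = laplaceConv f g' t := by
  rw [laplaceConv_comm, laplaceConv_congr_left ht h, laplaceConv_comm]

lemma LaplaceConvExistsAt.congr_left (ht : 0 ≤ t) (h : f =ᵐ[volume.restrict (Ioo 0 t)] f')
    (hfg : LaplaceConvExistsAt f g t) : LaplaceConvExistsAt f' g t := by
  rw [LaplaceConvExistsAt, intervalIntegrable_iff_integrableOn_Ioo_of_le ht] at hfg ⊢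
  exact hfg.congr (h.mono fun s hs ↦ by simp only [hs])

lemma LaplaceConvExistsAt.congr_right (ht : 0 ≤ t) (h : g =ᵐ[volume.restrict (Ioo 0 t)] g')
    (hfg : LaplaceConvExistsAt f g t) : LaplaceConvExistsAt f g' t :=
  (hfg.symm.congr_left ht h).symm

lemma laplaceConv_add_right (hg : LaplaceConvExistsAt f g t) (hg' : LaplaceConvExistsAt f g' t) :
    laplaceConv f (g + g') t = laplaceConv f g t + laplaceConv f g' t := by
  simp only [laplaceConv, Pi.add_apply, mul_add]
  exact intervalIntegral.integral_add hg hg'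

lemma LaplaceConvExistsAt.add_right (hg : LaplaceConvExistsAt f g t)
    (hg' : LaplaceConvExistsAt f g' t) : LaplaceConvExistsAt f (g + g') t := by
  simpa only [LaplaceConvExistsAt, Pi.add_apply, mul_add] using IntervalIntegrable.add hg hg'

lemma laplaceConv_smul_right (a : ℝ) (f g : ℝ → ℝ) (t : ℝ) :
    laplaceConv f (a • g) t = a * laplaceConv f g t := by
  simp only [laplaceConv, Pi.smul_apply, smul_eq_mul, mul_left_comm _ a,
    intervalIntegral.integral_const_mul]

lemma LaplaceConvExistsAt.smul_right (a : ℝ) (h : LaplaceConvExistsAt f g t) :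
    LaplaceConvExistsAt f (a • g) t := by
  simpa only [LaplaceConvExistsAt, Pi.smul_apply, smul_eq_mul, mul_left_comm _ a]
    using IntervalIntegrable.const_mul h a

end LaplaceConv

section Truncation

open ContinuousLinearMap Convolution

variable {f g k : ℝ → ℝ} {t x : ℝ}

lemma indicator_mul_indicator_comp_sub (f g : ℝ → ℝ) (hxt : x ≤ t) (s : ℝ) :
    (Ioo 0 t).indicator f s * (Ioo 0 t).indicator g (x - s) =
      (Ioo 0 x).indicator (fun s ↦ f s * g (x - s)) s := by
  simp only [indicator_apply, mem_Ioo]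
  grind

lemma integrable_indicator_Ioo (ht : 0 ≤ t)
    (hf : IntervalIntegrable f volume 0 t) : Integrable ((Ioo 0 t).indicator f) :=
  ((intervalIntegrable_iff_integrableOn_Ioo_of_le ht).1 hf).integrable_indicator measurableSet_Ioo

lemma convolution_indicator_eq_laplaceConv (hx : 0 ≤ x) (hxt : x ≤ t) :
    ((Ioo 0 t).indicator f ⋆[mul ℝ ℝ, volume] (Ioo 0 t).indicator g) x = laplaceConv f g x := by
  simp only [convolution_def, mul_apply', indicator_mul_indicator_comp_sub f g hxt,
    laplaceConv_eq_integral_indicator hx]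

lemma convolution_indicator_aeEq_laplaceConv (f g : ℝ → ℝ) (t : ℝ) :
    (Ioo 0 t).indicator f ⋆[mul ℝ ℝ, volume] (Ioo 0 t).indicator g
      =ᵐ[volume.restrict (Ioo 0 t)] laplaceConv f g := by
  filter_upwards [ae_restrict_mem measurableSet_Ioo] with x hx
  exact convolution_indicator_eq_laplaceConv hx.1.le hx.2.le

lemma convolution_indicator_left_eq_laplaceConv (ht : 0 ≤ t) :
    ((Ioo 0 t).indicator f ⋆[mul ℝ ℝ, volume] g) t = laplaceConv f g t := by
  simp only [convolution_def, mul_apply', laplaceConv_eq_integral_indicator ht,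
    indicator_mul_left]

lemma convolutionExistsAt_indicator_left_iff (ht : 0 ≤ t) :
    ConvolutionExistsAt ((Ioo 0 t).indicator f) g t (mul ℝ ℝ) ↔ LaplaceConvExistsAt f g t := by
  rw [laplaceConvExistsAt_iff ht]
  exact integrable_congr
    (.of_forall fun s ↦ (indicator_mul_left (Ioo 0 t) f fun s ↦ g (t - s)).symm)

lemma mul_indicator_comp_sub (f k : ℝ → ℝ) (t s : ℝ) :
    f s * (Ioo 0 t).indicator k (t - s) =
      (Ioo 0 t).indicator (fun s ↦ f s * k (t - s)) s := by
  simp only [indicator_apply, mem_Ioo]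
  grind

lemma convolution_indicator_right_eq_laplaceConv (ht : 0 ≤ t) :
    (f ⋆[mul ℝ ℝ, volume] (Ioo 0 t).indicator g) t = laplaceConv f g t := by
  simp only [convolution_def, mul_apply', mul_indicator_comp_sub,
    laplaceConv_eq_integral_indicator ht]

lemma convolutionExistsAt_indicator_right_iff (ht : 0 ≤ t) :
    ConvolutionExistsAt f ((Ioo 0 t).indicator g) t (mul ℝ ℝ) ↔ LaplaceConvExistsAt f g t := by
  simp only [ConvolutionExistsAt, mul_apply', mul_indicator_comp_sub, laplaceConvExistsAt_iff ht]

lemma intervalIntegrable_laplaceConv (ht : 0 ≤ t) (hf : IntervalIntegrable f volume 0 t)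
    (hg : IntervalIntegrable g volume 0 t) : IntervalIntegrable (laplaceConv f g) volume 0 t := by
  have h := ((integrable_indicator_Ioo ht hf).integrable_convolution (mul ℝ ℝ)
    (integrable_indicator_Ioo ht hg)).integrableOn (s := Ioo 0 t)
  rw [intervalIntegrable_iff_integrableOn_Ioo_of_le ht]
  exact h.congr (convolution_indicator_aeEq_laplaceConv f g t)

lemma convolutionExistsAt_norm_indicator (ht : 0 ≤ t)
    (h : LaplaceConvExistsAt (laplaceConv |f| |g|) |k| t) :
    ConvolutionExistsAt ((fun y ↦ ‖(Ioo 0 t).indicator f y‖) ⋆[mul ℝ ℝ, volume]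
      fun y ↦ ‖(Ioo 0 t).indicator g y‖) (fun y ↦ ‖(Ioo 0 t).indicator k y‖) t (mul ℝ ℝ) := by
  simp only [norm_indicator_eq_indicator_norm]
  exact (convolutionExistsAt_indicator_right_iff ht).2
    (h.congr_left ht (convolution_indicator_aeEq_laplaceConv |f| |g| t).symm)

lemma laplaceConv_assoc (ht : 0 ≤ t) (hf : IntervalIntegrable f volume 0 t)
    (hg : IntervalIntegrable g volume 0 t) (hk : IntervalIntegrable k volume 0 t)
    (h : LaplaceConvExistsAt (laplaceConv |f| |g|) |k| t) :
    laplaceConv (laplaceConv f g) k t = laplaceConv f (laplaceConv g k) t := by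
  rw [← laplaceConv_congr_left ht (convolution_indicator_aeEq_laplaceConv f g t),
    ← laplaceConv_congr_right ht (convolution_indicator_aeEq_laplaceConv g k t),
    ← convolution_indicator_right_eq_laplaceConv ht, ← convolution_indicator_left_eq_laplaceConv ht]
  exact convolution_assoc_of_integrable (integrable_indicator_Ioo ht hf)
    (integrable_indicator_Ioo ht hg) (integrable_indicator_Ioo ht hk)
    (convolutionExistsAt_norm_indicator ht h)

lemma LaplaceConvExistsAt.assoc (ht : 0 ≤ t) (hf : IntervalIntegrable f volume 0 t)
    (hg : IntervalIntegrable g volume 0 t) (hk : IntervalIntegrable k volume 0 t)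
    (h : LaplaceConvExistsAt (laplaceConv |f| |g|) |k| t) :
    LaplaceConvExistsAt f (laplaceConv g k) t :=
  .congr_right ht (convolution_indicator_aeEq_laplaceConv g k t) <|
    (convolutionExistsAt_indicator_left_iff ht).1 <|
      convolutionExistsAt_convolution_right (integrable_indicator_Ioo ht hf)
        (integrable_indicator_Ioo ht hg) (integrable_indicator_Ioo ht hk)
        (convolutionExistsAt_norm_indicator ht h)

end Truncation

section Primitive

variable {f g k φ K F : ℝ → ℝ} {t z M : ℝ}

lemma LaplaceConvExistsAt.of_bounded_left (ht : 0 ≤ t) (hf : IntervalIntegrable f volume 0 t)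
    (hM : ∀ s ∈ Ioo 0 t, |f s| ≤ M) (hg : IntervalIntegrable g volume 0 t) :
    LaplaceConvExistsAt f g t := by
  have hg' : IntervalIntegrable (fun s ↦ g (t - s)) volume 0 t := by
    simpa only [sub_self, sub_zero] using (hg.comp_sub_left t).symm
  rw [intervalIntegrable_iff_integrableOn_Ioo_of_le ht] at hf hg'
  rw [LaplaceConvExistsAt, intervalIntegrable_iff_integrableOn_Ioo_of_le ht]
  exact hg'.bdd_mul hf.aestronglyMeasurable
    ((ae_restrict_mem measurableSet_Ioo).mono fun s hs ↦ hM s hs)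

lemma laplaceConv_left_comm (ht : 0 ≤ t) (hf : IntervalIntegrable f volume 0 t)
    (hg : IntervalIntegrable g volume 0 t) (hk : IntervalIntegrable k volume 0 t)
    (h : LaplaceConvExistsAt (laplaceConv |f| |g|) |k| t) :
    laplaceConv f (laplaceConv g k) t = laplaceConv g (laplaceConv f k) t := by
  have h' : LaplaceConvExistsAt (laplaceConv |g| |f|) |k| t := by
    rwa [funext (laplaceConv_comm |g| |f|)]
  rw [← laplaceConv_assoc ht hf hg hk h, ← laplaceConv_assoc ht hg hf hk h',
    funext (laplaceConv_comm f g)]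

lemma laplaceConvExistsAt_abs_one (ht : 0 ≤ t) (hf : IntervalIntegrable f volume 0 t)
    (hg : IntervalIntegrable g volume 0 t) :
    LaplaceConvExistsAt (laplaceConv |1| |f|) |g| t := by
  have habs : |(1 : ℝ → ℝ)| = 1 := funext fun _ ↦ abs_one
  rw [habs]
  have hle : ∀ s ∈ Ioo 0 t, |laplaceConv 1 |f| s| ≤ ∫ r in (0 : ℝ)..t, |f r| := by
    intro s hs
    have hnonneg : 0 ≤ ∫ r in (0 : ℝ)..s, |f r| :=
      intervalIntegral.integral_nonneg hs.1.le fun r _ ↦ abs_nonneg (f r)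
    rw [laplaceConv_one_left]
    exact (abs_of_nonneg hnonneg).trans_le <| intervalIntegral.integral_mono_interval le_rfl
      hs.1.le hs.2.le (.of_forall fun r ↦ abs_nonneg (f r)) hf.abs
  exact .of_bounded_left ht (intervalIntegrable_laplaceConv ht intervalIntegrable_const hf.abs)
    hle hg.abs

lemma laplaceConvExistsAt_laplaceConv_one (ht : 0 ≤ t) (hf : IntervalIntegrable f volume 0 t)
    (hg : IntervalIntegrable g volume 0 t) : LaplaceConvExistsAt f (laplaceConv 1 g) t := by
  refine .assoc ht hf intervalIntegrable_const hg ?_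
  rw [funext (laplaceConv_comm |f| |1|)]
  exact laplaceConvExistsAt_abs_one ht hf hg

lemma integral_laplaceConv (ht : 0 ≤ t) (hf : IntervalIntegrable f volume 0 t)
    (hg : IntervalIntegrable g volume 0 t) :
    ∫ s in (0 : ℝ)..t, laplaceConv f g s = laplaceConv f (laplaceConv 1 g) t := by
  rw [← laplaceConv_one_left]
  exact laplaceConv_left_comm ht intervalIntegrable_const hf hg
    (laplaceConvExistsAt_abs_one ht hf hg)

lemma laplaceConv_eq_integral_of_absolutelyContinuous (ht : 0 ≤ t)
    (hf : IntervalIntegrable f volume 0 t) (hF : AbsolutelyContinuousOnInterval F 0 t) :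
    laplaceConv f F t = ∫ s in (0 : ℝ)..t, (F 0 • f + laplaceConv f (deriv F)) s := by
  have hF' := hF.intervalIntegrable_deriv
  have hprim : EqOn F (F 0 • 1 + laplaceConv 1 (deriv F)) (Ioo 0 t) := by
    intro s hs
    have hFs : AbsolutelyContinuousOnInterval F 0 s :=
      hF.mono (uIcc_subset_uIcc left_mem_uIcc (mem_uIcc_of_le hs.1.le hs.2.le))
    simp [laplaceConv_one_left, hFs.integral_deriv_eq_sub]
  have hexists : LaplaceConvExistsAt f (F 0 • 1) t :=
    .smul_right _ (laplaceConvExistsAt_one_right_iff.2 hf)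
  rw [laplaceConv_congr_right ht (hprim.aeEq_restrict measurableSet_Ioo),
    laplaceConv_add_right hexists]
  · simp only [Pi.add_apply, Pi.smul_apply, smul_eq_mul]
    rw [intervalIntegral.integral_add (hf.const_mul _) (intervalIntegrable_laplaceConv ht hf hF'),
      intervalIntegral.integral_const_mul, integral_laplaceConv ht hf hF', laplaceConv_smul_right,
      laplaceConv_comm f 1, laplaceConv_one_left]
  · exact laplaceConvExistsAt_laplaceConv_one ht hf hF'

lemma laplaceConvExistsAt_resolvent (a : ℝ) (ht : 0 ≤ t) (hφ : IntervalIntegrable φ volume 0 t)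
    (hK : IntervalIntegrable K volume 0 t) (hk : IntervalIntegrable k volume 0 t)
    (hφK : LaplaceConvExistsAt φ K t) (hφKk : LaplaceConvExistsAt (laplaceConv |φ| |K|) |k| t) :
    LaplaceConvExistsAt φ (a • K + laplaceConv K k) t :=
  (hφK.smul_right a).add_right (.assoc ht hφ hK hk hφKk)

lemma laplaceConv_resolvent (a : ℝ) (ht : 0 < t) (hφ : IntervalIntegrable φ volume 0 t)
    (hK : IntervalIntegrable K volume 0 t) (hk : IntervalIntegrable k volume 0 t)
    (hφK : LaplaceConvExistsAt φ K t) (hφKk : LaplaceConvExistsAt (laplaceConv |φ| |K|) |k| t)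
    (hres : EqOn (laplaceConv φ K) (1 + z • laplaceConv 1 K) (Ioc 0 t)) :
    laplaceConv φ (a • K + laplaceConv K k) t =
      a + (∫ s in (0 : ℝ)..t, k s) + z * ∫ s in (0 : ℝ)..t, (a • K + laplaceConv K k) s := by
  have hkK : LaplaceConvExistsAt k (z • laplaceConv 1 K) t :=
    .smul_right z (laplaceConvExistsAt_laplaceConv_one ht.le hk hK)
  have hconv : laplaceConv φ (laplaceConv K k) t =
      (∫ s in (0 : ℝ)..t, k s) + z * ∫ s in (0 : ℝ)..t, laplaceConv K k s := by
    rw [← laplaceConv_assoc ht.le hφ hK hk hφKk, laplaceConv_congr_left ht.le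
      ((hres.mono Ioo_subset_Ioc_self).aeEq_restrict measurableSet_Ioo), laplaceConv_comm,
      laplaceConv_add_right (laplaceConvExistsAt_one_right_iff.2 hk) hkK, laplaceConv_smul_right,
      laplaceConv_comm k 1, laplaceConv_one_left, ← integral_laplaceConv ht.le hk hK,
      funext (laplaceConv_comm k K)]
  have hint : ∫ s in (0 : ℝ)..t, (a • K + laplaceConv K k) s =
      a * laplaceConv 1 K t + ∫ s in (0 : ℝ)..t, laplaceConv K k s := by
    rw [laplaceConv_one_left, ← intervalIntegral.integral_const_mul]
    exact intervalIntegral.integral_add (hK.const_mul a)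
      (intervalIntegrable_laplaceConv ht.le hK hk)
  rw [laplaceConv_add_right (hφK.smul_right a) (.assoc ht.le hφ hK hk hφKk),
    laplaceConv_smul_right, hconv, hint, hres ⟨ht, le_rfl⟩]
  simp only [Pi.add_apply, Pi.one_apply, Pi.smul_apply, smul_eq_mul]
  ring

end Primitive

section MittagLeffler

variable {α β w x z R : ℝ}

lemma rpow_mul_exp_neg_le_Gamma (hx : 1 ≤ x) (hR : 0 ≤ R) :
    R ^ (x - 1) * Real.exp (-R) ≤ Real.Gamma x := by
  have hconv := Real.GammaIntegral_convergent (s := x) (by linarith)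
  calc R ^ (x - 1) * Real.exp (-R)
      = ∫ y in Ioi R, Real.exp (-y) * R ^ (x - 1) := by
        rw [integral_mul_const, integral_exp_neg_Ioi, mul_comm]
    _ ≤ ∫ y in Ioi R, Real.exp (-y) * y ^ (x - 1) := by
        refine setIntegral_mono_on ((integrableOn_exp_neg_Ioi R).mul_const _)
          (hconv.mono_set (Ioi_subset_Ioi hR)) measurableSet_Ioi fun y (hy : R < y) ↦ ?_
        gcongr
    _ ≤ ∫ y in Ioi 0, Real.exp (-y) * y ^ (x - 1) := by
        refine setIntegral_mono_set hconv ?_ (Ioi_subset_Ioi hR).eventuallyLE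
        filter_upwards [ae_restrict_mem measurableSet_Ioi] with y (hy : 0 < y)
        simp only [Pi.zero_apply]
        positivity
    _ = Real.Gamma x := (Real.Gamma_eq_integral (by linarith)).symm

lemma Gamma_mul_natCast_add_pos (hα : 0 < α) (hβ : 0 < β) (k : ℕ) :
    0 < Real.Gamma (α * k + β) :=
  Real.Gamma_pos_of_pos (by positivity)

lemma summable_ml (hα : 0 < α) (hβ : 0 < β) (z : ℝ) :
    Summable fun k : ℕ ↦ z ^ k / Real.Gamma (α * k + β) := by
  obtain ⟨R, hR, hRα⟩ : ∃ R : ℝ, 0 < R ∧ R ^ α = |z| + 1 :=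
    ⟨(|z| + 1) ^ α⁻¹, by positivity, Real.rpow_inv_rpow (by positivity) hα.ne'⟩
  have hratio : |z| / R ^ α < 1 := by
    rw [hRα, div_lt_one (by positivity)]
    linarith
  have hgeom : Summable fun k : ℕ ↦ (|z| / R ^ α) ^ k * (Real.exp R / R ^ (β - 1)) :=
    (summable_geometric_of_lt_one (by positivity) hratio).mul_right _
  refine .of_norm_bounded_eventually_nat hgeom ?_
  obtain ⟨N, hN⟩ := exists_nat_ge (1 / α)
  filter_upwards [eventually_ge_atTop N] with k hk
  have hαk : 1 ≤ α * k := by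
    rw [← div_le_iff₀' hα]
    exact hN.trans (Nat.cast_le.2 hk)
  have hΓ : (R ^ α) ^ k * R ^ (β - 1) * Real.exp (-R) ≤ Real.Gamma (α * k + β) := by
    have := rpow_mul_exp_neg_le_Gamma (x := α * k + β) (by linarith) hR.le
    rwa [add_sub_assoc, Real.rpow_add hR, Real.rpow_mul_natCast hR.le] at this
  calc ‖z ^ k / Real.Gamma (α * k + β)‖
      = |z| ^ k / Real.Gamma (α * k + β) := by
        rw [norm_div, norm_pow, Real.norm_eq_abs,
          Real.norm_of_nonneg (Gamma_mul_natCast_add_pos hα hβ k).le]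
    _ ≤ |z| ^ k / ((R ^ α) ^ k * R ^ (β - 1) * Real.exp (-R)) := by gcongr
    _ = (|z| / R ^ α) ^ k * (Real.exp R / R ^ (β - 1)) := by
        rw [Real.exp_neg, div_pow]
        field_simp

lemma abs_ml_le (hα : 0 < α) (hβ : 0 < β) (hz : |z| ≤ w) : |ml α β z| ≤ ml α β w := by
  rw [← Real.norm_eq_abs]
  refine tsum_of_norm_bounded (summable_ml hα hβ w).hasSum fun k ↦ ?_
  have := Gamma_mul_natCast_add_pos hα hβ k
  rw [norm_div, norm_pow, Real.norm_eq_abs, Real.norm_of_nonneg this.le]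
  gcongr

lemma continuous_ml (hα : 0 < α) (hβ : 0 < β) : Continuous (ml α β) := by
  refine continuous_iff_continuousAt.2 fun z ↦ ?_
  have hball : ContinuousOn (ml α β) (Metric.ball 0 (|z| + 1)) := by
    refine continuousOn_tsum (fun k ↦ by fun_prop) (summable_ml hα hβ (|z| + 1)) fun k y hy ↦ ?_
    have := Gamma_mul_natCast_add_pos hα hβ k
    have hy' : |y| ≤ |z| + 1 := by simpa using (mem_ball_zero_iff.1 hy).le
    rw [norm_div, norm_pow, Real.norm_eq_abs, Real.norm_of_nonneg this.le]
    gcongr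
  exact hball.continuousAt (Metric.isOpen_ball.mem_nhds (by simp))

lemma ml_eq_inv_Gamma_add (hα : 0 < α) (hβ : 0 < β) (z : ℝ) :
    ml α β z = (Real.Gamma β)⁻¹ + z * ml α (α + β) z := by
  rw [ml, (summable_ml hα hβ z).tsum_eq_zero_add, ml, ← tsum_mul_left]
  congr 1
  · simp
  · refine tsum_congr fun k ↦ ?_
    push_cast
    rw [mul_add_one, add_assoc, pow_succ']
    ring

end MittagLeffler

/-- The Riemann–Liouville kernel `s ^ (b - 1) / Γ(b)`: Laplace convolution with it is fractional
integration of order `b`. -/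
noncomputable def rlKernel (b s : ℝ) : ℝ := s ^ (b - 1) / Real.Gamma b

/-- The Mittag-Leffler kernel `s ^ (β - 1) E_{α,β}(z s ^ α)`, the resolvent kernel of fractional
linear equations. -/
noncomputable def mlKernel (α β z s : ℝ) : ℝ := s ^ (β - 1) * ml α β (z * s ^ α)

section Kernels

variable {α β a b s t z : ℝ}

lemma rlKernel_one : rlKernel 1 = 1 := by
  ext s
  simp [rlKernel]

lemma rlKernel_nonneg (hb : 0 < b) (hs : 0 ≤ s) : 0 ≤ rlKernel b s :=
  div_nonneg (Real.rpow_nonneg hs _) (Real.Gamma_pos_of_pos hb).le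

lemma intervalIntegrable_rlKernel (hb : 0 < b) (t : ℝ) :
    IntervalIntegrable (rlKernel b) volume 0 t :=
  (intervalIntegral.intervalIntegrable_rpow' (by linarith)).div_const _

lemma integral_rpow_mul_sub_rpow (ha : 0 < a) (hb : 0 < b) (ht : 0 < t) :
    ∫ s in (0 : ℝ)..t, s ^ (a - 1) * (t - s) ^ (b - 1) =
      t ^ (a + b - 1) * (Real.Gamma a * Real.Gamma b / Real.Gamma (a + b)) := by
  have hcast : ∫ s in (0 : ℝ)..t, (s : ℂ) ^ ((a : ℂ) - 1) * ((t : ℂ) - s) ^ ((b : ℂ) - 1) =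
      ∫ s in (0 : ℝ)..t, ((s ^ (a - 1) * (t - s) ^ (b - 1) : ℝ) : ℂ) := by
    refine intervalIntegral.integral_congr fun s hs ↦ ?_
    rw [uIcc_of_le ht.le] at hs
    simp only [Complex.ofReal_mul, Complex.ofReal_cpow hs.1,
      Complex.ofReal_cpow (sub_nonneg.2 hs.2), Complex.ofReal_sub, Complex.ofReal_one]
  have hbeta := Complex.betaIntegral_scaled a b ht
  rw [Complex.betaIntegral_eq_Gamma_mul_div _ _ (by simpa) (by simpa), hcast,
    intervalIntegral.integral_ofReal, ← Complex.ofReal_add, ← Complex.ofReal_one,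
    ← Complex.ofReal_sub, ← Complex.ofReal_cpow ht.le] at hbeta
  simp only [Complex.Gamma_ofReal] at hbeta
  exact_mod_cast hbeta

lemma laplaceConv_rlKernel (ha : 0 < a) (hb : 0 < b) (ht : 0 < t) :
    laplaceConv (rlKernel a) (rlKernel b) t = rlKernel (a + b) t := by
  simp only [laplaceConv, rlKernel, div_mul_div_comm, intervalIntegral.integral_div,
    integral_rpow_mul_sub_rpow ha hb ht]
  field_simp

lemma laplaceConvExistsAt_rlKernel (ha : 0 < a) (hb : 0 < b) (ht : 0 < t) :
    LaplaceConvExistsAt (rlKernel a) (rlKernel b) t := by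
  -- A divergent integral would have the junk value `0`, but the Beta integral is positive.
  by_contra hundef
  have hpos : 0 < rlKernel (a + b) t :=
    div_pos (Real.rpow_pos_of_pos ht _) (Real.Gamma_pos_of_pos (add_pos ha hb))
  rw [← laplaceConv_rlKernel ha hb ht, laplaceConv,
    intervalIntegral.integral_undef hundef] at hpos
  exact hpos.false

lemma hasSum_mlKernel (hα : 0 < α) (hβ : 0 < β) (z : ℝ) (hs : 0 < s) :
    HasSum (fun k : ℕ ↦ z ^ k * rlKernel (α * k + β) s) (mlKernel α β z s) := by
  refine ((summable_ml hα hβ (z * s ^ α)).hasSum.mul_left (s ^ (β - 1))).congr_fun fun k ↦ ?_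
  rw [rlKernel, add_sub_assoc, Real.rpow_add hs, Real.rpow_mul_natCast hs.le, mul_pow]
  ring

lemma mlKernel_one (α z t : ℝ) : mlKernel α 1 z t = ml α 1 (z * t ^ α) := by
  simp [mlKernel]

lemma continuous_ml_mul_rpow (hα : 0 < α) (hβ : 0 < β) (z : ℝ) :
    Continuous fun s : ℝ ↦ ml α β (z * s ^ α) :=
  (continuous_ml hα hβ).comp ((Real.continuous_rpow_const hα.le).const_mul z)

lemma intervalIntegrable_mlKernel (hα : 0 < α) (hβ : 0 < β) (z t : ℝ) :
    IntervalIntegrable (mlKernel α β z) volume 0 t :=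
  (intervalIntegral.intervalIntegrable_rpow' (by linarith)).mul_continuousOn
    (continuous_ml_mul_rpow hα hβ z).continuousOn

lemma laplaceConvExistsAt_mlKernel_rlKernel (hα : 0 < α) (hβ : 0 < β) (hb : 0 < b) (z : ℝ)
    (ht : 0 < t) : LaplaceConvExistsAt (mlKernel α β z) (rlKernel b) t := by
  have h := (laplaceConvExistsAt_rlKernel hβ hb ht).mul_continuousOn
    (continuous_ml_mul_rpow hα hβ z).continuousOn |>.const_mul (Real.Gamma β)
  refine h.congr fun s _ ↦ ?_
  simp only [mlKernel, rlKernel]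
  field_simp

lemma hasSum_laplaceConv_mlKernel_rlKernel (hα : 0 < α) (hβ : 0 < β) (hb : 0 < b) (z : ℝ)
    (ht : 0 < t) :
    HasSum (fun k : ℕ ↦ z ^ k * laplaceConv (rlKernel (α * k + β)) (rlKernel b) t)
      (laplaceConv (mlKernel α β z) (rlKernel b) t) := by
  have hαβ (k : ℕ) : 0 < α * k + β := by positivity
  have hmem {s : ℝ} (hs : s ∈ uIoc 0 t) : 0 < s ∧ s ≤ t := by rwa [uIoc_of_le ht.le] at hs
  have hterm (z : ℝ) {s : ℝ} (hs : s ∈ uIoc 0 t) : HasSum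
      (fun k : ℕ ↦ z ^ k * (rlKernel (α * k + β) s * rlKernel b (t - s)))
      (mlKernel α β z s * rlKernel b (t - s)) := by
    simpa only [mul_assoc] using
      (hasSum_mlKernel hα hβ z (hmem hs).1).mul_right (rlKernel b (t - s))
  simp only [laplaceConv, ← intervalIntegral.integral_const_mul]
  refine intervalIntegral.hasSum_integral_of_dominated_convergence
    (fun k s ↦ |z| ^ k * (rlKernel (α * k + β) s * rlKernel b (t - s))) (fun k ↦ ?_)
    (fun k ↦ .of_forall fun s hs ↦ ?_) (.of_forall fun s hs ↦ (hterm |z| hs).summable) ?_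
    (.of_forall fun s hs ↦ hterm z hs)
  · exact ((laplaceConvExistsAt_rlKernel (hαβ k) hb ht).const_mul
      _).aestronglyMeasurable_restrict_uIoc
  · rw [norm_mul, norm_pow, Real.norm_eq_abs, Real.norm_of_nonneg (mul_nonneg
      (rlKernel_nonneg (hαβ k) (hmem hs).1.le) (rlKernel_nonneg hb (sub_nonneg.2 (hmem hs).2)))]
  · exact (laplaceConvExistsAt_mlKernel_rlKernel hα hβ hb |z| ht).congr fun s hs ↦
      (hterm |z| hs).tsum_eq.symm

lemma laplaceConv_mlKernel_rlKernel (hα : 0 < α) (hβ : 0 < β) (hb : 0 < b) (z : ℝ) (ht : 0 < t) :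
    laplaceConv (mlKernel α β z) (rlKernel b) t = mlKernel α (β + b) z t := by
  refine (hasSum_laplaceConv_mlKernel_rlKernel hα hβ hb z ht).unique <|
    (hasSum_mlKernel hα (add_pos hβ hb) z ht).congr_fun fun k ↦ ?_
  rw [laplaceConv_rlKernel (by positivity) hb ht, add_assoc]

lemma mlKernel_one_eqOn (hα : 0 < α) (z : ℝ) :
    EqOn (mlKernel α 1 z) (1 + z • laplaceConv 1 (mlKernel α α z)) (Ici 0) := by
  intro t ht
  obtain rfl | ht : 0 = t ∨ 0 < t := (mem_Ici.1 ht).eq_or_lt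
  · simp [mlKernel, ml_eq_inv_Gamma_add hα one_pos, Real.zero_rpow hα.ne', laplaceConv]
  · have hone : laplaceConv 1 (mlKernel α α z) t = mlKernel α (α + 1) z t := by
      rw [← rlKernel_one, laplaceConv_comm, laplaceConv_mlKernel_rlKernel hα hα one_pos z ht]
    rw [mlKernel_one, ml_eq_inv_Gamma_add hα one_pos]
    simp only [Pi.add_apply, Pi.one_apply, Pi.smul_apply, smul_eq_mul, hone, mlKernel,
      add_sub_cancel_right, Real.Gamma_one, inv_one, mul_assoc]

lemma abs_mlKernel_le (hα : 0 < α) (hβ : 0 < β) (z : ℝ) (hs : 0 ≤ s) :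
    |mlKernel α β z s| ≤ mlKernel α β |z| s := by
  rw [mlKernel, abs_mul, abs_of_nonneg (Real.rpow_nonneg hs _)]
  refine mul_le_mul_of_nonneg_left (abs_ml_le hα hβ ?_) (Real.rpow_nonneg hs _)
  rw [abs_mul, abs_of_nonneg (Real.rpow_nonneg hs _)]

lemma laplaceConv_rlKernel_mlKernel (hα : 0 < α) (hα1 : α < 1) (z : ℝ) (ht : 0 < t) :
    laplaceConv (rlKernel (1 - α)) (mlKernel α α z) t = mlKernel α 1 z t := by
  rw [laplaceConv_comm, laplaceConv_mlKernel_rlKernel hα hα (sub_pos.2 hα1) z ht,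
    add_sub_cancel]

lemma laplaceConv_abs_rlKernel_abs_mlKernel_le (hα : 0 < α) (hβ : 0 < β) (hb : 0 < b) (z : ℝ)
    (ht : 0 < t) :
    laplaceConv |rlKernel b| |mlKernel α β z| t ≤ mlKernel α (β + b) |z| t := by
  have hexists := (laplaceConvExistsAt_mlKernel_rlKernel hα hβ hb |z| ht).symm
  rw [LaplaceConvExistsAt, intervalIntegrable_iff_integrableOn_Ioc_of_le ht.le] at hexists
  rw [← laplaceConv_mlKernel_rlKernel hα hβ hb |z| ht, laplaceConv_comm (mlKernel α β |z|)]
  simp only [laplaceConv, intervalIntegral.integral_of_le ht.le]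
  refine integral_mono_of_nonneg (.of_forall fun s ↦ by simp only [Pi.abs_apply]; positivity)
    hexists ?_
  filter_upwards [ae_restrict_mem measurableSet_Ioc] with s hs
  have hφ := rlKernel_nonneg hb hs.1.le
  rw [Pi.abs_apply, abs_of_nonneg hφ]
  exact mul_le_mul_of_nonneg_left (abs_mlKernel_le hα hβ z (sub_nonneg.2 hs.2)) hφ

lemma laplaceConvExistsAt_abs_rlKernel_abs_mlKernel (hα : 0 < α) (hα1 : α < 1) (z : ℝ)
    {k : ℝ → ℝ} (ht : 0 ≤ t) (hk : IntervalIntegrable k volume 0 t) :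
    LaplaceConvExistsAt (laplaceConv |rlKernel (1 - α)| |mlKernel α α z|) |k| t := by
  refine .of_bounded_left (M := ml α 1 (|z| * t ^ α)) ht (intervalIntegrable_laplaceConv ht
    (intervalIntegrable_rlKernel (sub_pos.2 hα1) t).abs
    (intervalIntegrable_mlKernel hα hα z t).abs) (fun s hs ↦ ?_) hk.abs
  have hnonneg : 0 ≤ laplaceConv |rlKernel (1 - α)| |mlKernel α α z| s :=
    intervalIntegral.integral_nonneg hs.1.le fun r _ ↦ mul_nonneg (abs_nonneg _) (abs_nonneg _)
  have hle : |(|z| * s ^ α)| ≤ |z| * t ^ α := by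
    have := Real.rpow_le_rpow hs.1.le hs.2.le hα.le
    rw [abs_of_nonneg (mul_nonneg (abs_nonneg z) (Real.rpow_nonneg hs.1.le α))]
    gcongr
  calc |laplaceConv |rlKernel (1 - α)| |mlKernel α α z| s|
      = laplaceConv |rlKernel (1 - α)| |mlKernel α α z| s := abs_of_nonneg hnonneg
    _ ≤ mlKernel α (α + (1 - α)) |z| s :=
        laplaceConv_abs_rlKernel_abs_mlKernel_le hα hα (sub_pos.2 hα1) z hs.1
    _ = ml α 1 (|z| * s ^ α) := by rw [add_sub_cancel, mlKernel_one]
    _ ≤ ml α 1 (|z| * t ^ α) := (le_abs_self _).trans (abs_ml_le hα one_pos hle)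

end Kernels

section AbsolutelyContinuous

variable {f g w : ℝ → ℝ} {a b c : ℝ}

lemma absolutelyContinuousOnInterval_congr (hf : AbsolutelyContinuousOnInterval f a b)
    (h : EqOn f g (uIcc a b)) : AbsolutelyContinuousOnInterval g a b := by
  rw [absolutelyContinuousOnInterval_iff] at hf ⊢
  intro ε hε
  obtain ⟨δ, hδ, hfδ⟩ := hf ε hε
  refine ⟨δ, hδ, fun E hE hlength ↦ ?_⟩
  rw [← Finset.sum_congr rfl fun i hi ↦ congrArg₂ dist (h (hE.1 i hi).1) (h (hE.1 i hi).2)]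
  exact hfδ E hE hlength

lemma absolutelyContinuousOnInterval_of_eqOn_integral (hw : IntervalIntegrable w volume a b)
    (h : EqOn f (fun t ↦ c + ∫ s in a..t, w s) (uIcc a b)) :
    AbsolutelyContinuousOnInterval f a b := by
  have hconst : AbsolutelyContinuousOnInterval (fun _ ↦ c) a b :=
    (LipschitzWith.const c).lipschitzOnWith.absolutelyContinuousOnInterval
  exact absolutelyContinuousOnInterval_congr (hconst.add <|
    hw.absolutelyContinuousOnInterval_intervalIntegral left_mem_uIcc) h.symm

lemma deriv_aeEq_of_eqOn_integral (ht : a ≤ b) (hw : IntervalIntegrable w volume a b)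
    (h : EqOn f (fun t ↦ c + ∫ s in a..t, w s) (Icc a b)) :
    deriv f =ᵐ[volume.restrict (Ioo a b)] w := by
  rw [EventuallyEq, ae_restrict_iff' measurableSet_Ioo]
  filter_upwards [hw.ae_hasDerivAt_integral] with s hs hsab
  rw [uIcc_of_le ht] at hs
  have hderiv := (hs (Ioo_subset_Icc_self hsab) a (left_mem_Icc.2 ht)).const_add c
  rw [← hderiv.deriv]
  exact (h.eventuallyEq_of_mem (Icc_mem_nhds hsab.1 hsab.2)).deriv_eq

end AbsolutelyContinuous

section Caputo

variable {α t : ℝ} {f k F : ℝ → ℝ}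

lemma caputo_eq_laplaceConv (α : ℝ) (f : ℝ → ℝ) (t : ℝ) :
    caputo α f t = laplaceConv (rlKernel (1 - α)) (deriv f) t := by
  rw [laplaceConv_comm, caputo, laplaceConv, ← intervalIntegral.integral_const_mul]
  refine intervalIntegral.integral_congr fun s _ ↦ ?_
  simp only [rlKernel, sub_sub_cancel_left]
  ring

lemma intervalIntegrable_caputo_integrand (hα1 : α < 1)
    (h : LaplaceConvExistsAt (rlKernel (1 - α)) (deriv f) t) :
    IntervalIntegrable (fun s ↦ (t - s) ^ (-α) * deriv f s) volume 0 t := by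
  have hΓ := Real.Gamma_pos_of_pos (sub_pos.2 hα1)
  refine (IntervalIntegrable.const_mul h.symm (Real.Gamma (1 - α))).congr fun s _ ↦ ?_
  simp only [rlKernel, sub_sub_cancel_left]
  field_simp

lemma mlKernel_solution_eq_integral (hα : 0 < α) (z c : ℝ) (ht : 0 ≤ t)
    (hF : AbsolutelyContinuousOnInterval F 0 t) :
    c * ml α 1 (z * t ^ α) + laplaceConv (mlKernel α α z) F t =
      c + ∫ s in (0 : ℝ)..t,
        ((z * c + F 0) • mlKernel α α z + laplaceConv (mlKernel α α z) (deriv F)) s := by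
  have hK := intervalIntegrable_mlKernel hα hα z t
  have hKF := intervalIntegrable_laplaceConv ht hK hF.intervalIntegrable_deriv
  rw [laplaceConv_eq_integral_of_absolutelyContinuous ht hK hF, ← mlKernel_one,
    mlKernel_one_eqOn hα z ht]
  simp only [Pi.add_apply, Pi.one_apply, Pi.smul_apply, smul_eq_mul, laplaceConv_one_left]
  rw [intervalIntegral.integral_add (hK.const_mul _) hKF,
    intervalIntegral.integral_add (hK.const_mul _) hKF, intervalIntegral.integral_const_mul,
    intervalIntegral.integral_const_mul]
  ring

lemma laplaceConvExistsAt_rlKernel_mlKernel_resolvent (hα : 0 < α) (hα1 : α < 1) (z a : ℝ)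
    (ht : 0 < t) (hk : IntervalIntegrable k volume 0 t) :
    LaplaceConvExistsAt (rlKernel (1 - α))
      (a • mlKernel α α z + laplaceConv (mlKernel α α z) k) t :=
  laplaceConvExistsAt_resolvent a ht.le (intervalIntegrable_rlKernel (sub_pos.2 hα1) t)
    (intervalIntegrable_mlKernel hα hα z t) hk
    (laplaceConvExistsAt_mlKernel_rlKernel hα hα (sub_pos.2 hα1) z ht).symm
    (laplaceConvExistsAt_abs_rlKernel_abs_mlKernel hα hα1 z ht.le hk)

lemma laplaceConv_rlKernel_mlKernel_resolvent (hα : 0 < α) (hα1 : α < 1) (z a : ℝ) (ht : 0 < t)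
    (hk : IntervalIntegrable k volume 0 t) :
    laplaceConv (rlKernel (1 - α)) (a • mlKernel α α z + laplaceConv (mlKernel α α z) k) t =
      a + (∫ s in (0 : ℝ)..t, k s) +
        z * ∫ s in (0 : ℝ)..t, (a • mlKernel α α z + laplaceConv (mlKernel α α z) k) s :=
  laplaceConv_resolvent a ht (intervalIntegrable_rlKernel (sub_pos.2 hα1) t)
    (intervalIntegrable_mlKernel hα hα z t) hk
    (laplaceConvExistsAt_mlKernel_rlKernel hα hα (sub_pos.2 hα1) z ht).symm
    (laplaceConvExistsAt_abs_rlKernel_abs_mlKernel hα hα1 z ht.le hk) fun _ hs ↦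
      (laplaceConv_rlKernel_mlKernel hα hα1 z hs.1).trans (mlKernel_one_eqOn hα z hs.1.le)

end Caputo

theorem fractional_ode_solution_general (α lam c T : ℝ) (hα : 0 < α) (hα1 : α < 1) (hT : 0 ≤ T)
    (F : ℝ → ℝ) (hF : AbsolutelyContinuousOnInterval F 0 T) :
    let Tstar : ℝ → ℝ := fun t ↦ c * ml α 1 (-lam * t ^ α) +
      ∫ τ in (0 : ℝ)..t, τ ^ (α - 1) * ml α α (-lam * τ ^ α) * F (t - τ)
    AbsolutelyContinuousOnInterval Tstar 0 T ∧ Tstar 0 = c ∧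
      ∀ t ∈ Ioc 0 T, IntervalIntegrable (fun s ↦ (t - s) ^ (-α) * deriv Tstar s) volume 0 t ∧
        caputo α Tstar t = -lam * Tstar t + F t := by
  intro Tstar
  let w := (-lam * c + F 0) • mlKernel α α (-lam) + laplaceConv (mlKernel α α (-lam)) (deriv F)
  have hFt {t : ℝ} (ht : t ∈ Icc 0 T) : AbsolutelyContinuousOnInterval F 0 t :=
    hF.mono (uIcc_subset_uIcc left_mem_uIcc (Icc_subset_uIcc ht))
  have hw : IntervalIntegrable w volume 0 T :=
    ((intervalIntegrable_mlKernel hα hα _ T).const_mul _).add (intervalIntegrable_laplaceConv hT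
      (intervalIntegrable_mlKernel hα hα _ T) hF.intervalIntegrable_deriv)
  have hprim : EqOn Tstar (fun t ↦ c + ∫ s in (0 : ℝ)..t, w s) (Icc 0 T) := fun t ht ↦
    mlKernel_solution_eq_integral hα (-lam) c ht.1 (hFt ht)
  refine ⟨absolutelyContinuousOnInterval_of_eqOn_integral hw (uIcc_of_le hT ▸ hprim),
    (hprim ⟨le_rfl, hT⟩).trans (by simp), fun t ht ↦ ?_⟩
  have hF' := (hFt (Ioc_subset_Icc_self ht)).intervalIntegrable_deriv
  have hderiv : deriv Tstar =ᵐ[volume.restrict (Ioo 0 t)] w :=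
    ae_restrict_of_ae_restrict_of_subset (Ioo_subset_Ioo_right ht.2)
      (deriv_aeEq_of_eqOn_integral hT hw hprim)
  constructor
  · exact intervalIntegrable_caputo_integrand hα1 <| .congr_right ht.1.le hderiv.symm <|
      laplaceConvExistsAt_rlKernel_mlKernel_resolvent hα hα1 _ _ ht.1 hF'
  · rw [caputo_eq_laplaceConv, laplaceConv_congr_right ht.1.le hderiv,
      laplaceConv_rlKernel_mlKernel_resolvent hα hα1 _ _ ht.1 hF',
      (hFt (Ioc_subset_Icc_self ht)).integral_deriv_eq_sub, hprim (Ioc_subset_Icc_self ht)]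
    ring

/-- for `0<α<1`, `λ>0`, `c ∈ ℝ`, `T>0` and `F ∈ C¹([0,T])`, the function
`T_*(t) = c E_α(−λ t^α) + ∫₀ᵗ τ^{α−1} E_{α,α}(−λ τ^α) F(t−τ) dτ` is continuous on `[0,T]`
with `T_*(0) = c`, and satisfies `(D^α T_*)(t) = −λ T_*(t) + F(t)` for all `t ∈ (0,T]`. -/
theorem fractional_ode_solution (α lam c T : ℝ)
    (hα : 0 < α) (hα1 : α < 1) (hlam : 0 < lam) (hT : 0 < T)
    (F : ℝ → ℝ) (hF : ContDiffOn ℝ 1 F (Set.Icc 0 T)) :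
    let Tstar : ℝ → ℝ := fun t => c * ml α 1 (-lam * t ^ α) +
      ∫ τ in (0:ℝ)..t, τ ^ (α - 1) * ml α α (-lam * τ ^ α) * F (t - τ)
    ContinuousOn Tstar (Set.Icc 0 T) ∧ Tstar 0 = c ∧
      ∀ t ∈ Set.Ioc (0:ℝ) T, caputo α Tstar t = -lam * Tstar t + F t := by
  have hF' : AbsolutelyContinuousOnInterval F 0 T :=
    ContDiffOn.absolutelyContinuousOnInterval (uIcc_of_le hT.le ▸ hF)
  obtain ⟨hcont, hzero, hode⟩ := fractional_ode_solution_general α lam c T hα hα1 hT.le F hF'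
  exact ⟨uIcc_of_le hT.le ▸ hcont.continuousOn, hzero, fun t ht ↦ (hode t ht).2⟩
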